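/- arXiv:1410.5143 — 3 statements merged into one kernel-verified Lean document; each statement's English description precedes it below -/
import Mathlib

section
/- Let T be an n×n complex block upper triangular matrix T = [[X, Y], [0, Z]] with X of size r×r and Z of size (n−r)×(n−r). Then det(I_n + T*T) ≥ det(I_r + X*X) · det(I_{n−r} + Z*Z). -/
/-!
Put `A = 1 + Xᴴ X` and `B = 1 + Zᴴ Z`. The Schur complement of the block `A` in `1 + Tᴴ T` is
`B + Yᴴ (1 - X A⁻¹ Xᴴ) Y`, and `1 - X A⁻¹ Xᴴ = (1 + X Xᴴ)⁻¹` is positive definite. Hence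
`det (1 + Tᴴ T) = det A * det (B + P)` with `P` positive semidefinite, and it remains to see that
adding `P` does not decrease `det B`. Writing `P = Wᴴ W`, the matrix determinant lemma gives
`det (B + P) = det B * det (1 + W B⁻¹ Wᴴ)`, and `det (1 + Q) ≥ 1` for positive semidefinite `Q`
because it is the product of the numbers `1 + λ` over the eigenvalues `λ ≥ 0` of `Q`.
-/

open Matrix

open scoped ComplexOrder

theorem one_le_det_one_add {n : ℕ} {Q : Matrix (Fin n) (Fin n) ℂ} (hQ : Q.PosSemidef) :
    1 ≤ (1 + Q).det := by
  have h : (1 + Q).det = ∏ i, (1 + (hQ.1.eigenvalues i : ℂ)) := by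
    -- Both sides are, up to the sign `(-1) ^ n`, the characteristic polynomial of `Q` at `-1`.
    have h1 := congrArg (Polynomial.eval (-1)) hQ.1.charpoly_eq
    rw [Matrix.eval_charpoly, Polynomial.eval_prod] at h1
    have h2 : scalar (Fin n) (-1 : ℂ) - Q = -(1 + Q) := by
      rw [map_neg, map_one]; abel
    have h3 : ∀ i, Polynomial.eval (-1)
        (Polynomial.X - Polynomial.C (hQ.1.eigenvalues i : ℂ)) =
        -(1 + (hQ.1.eigenvalues i : ℂ)) := by
      intro i; simp; ring
    rw [h2, det_neg] at h1
    erw [Finset.prod_congr rfl fun i _ => h3 i] at h1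
    rw [Finset.prod_neg] at h1
    simpa using h1
  rw [h]
  have h' : (1 : ℝ) ≤ ∏ i, (1 + hQ.1.eigenvalues i) :=
    Finset.one_le_prod fun i _ => by linarith [hQ.eigenvalues_nonneg i]
  exact_mod_cast h'

open scoped MatrixOrder Matrix.Norms.L2Operator in
theorem det_le_det_add {n : ℕ} {B P : Matrix (Fin n) (Fin n) ℂ} (hB : B.PosDef)
    (hP : P.PosSemidef) : B.det ≤ (B + P).det := by
  obtain ⟨W, rfl⟩ : ∃ W : Matrix (Fin n) (Fin n) ℂ, P = Wᴴ * W :=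
    CStarAlgebra.nonneg_iff_eq_star_mul_self.1 hP.nonneg
  rw [det_add_mul _ _ hB.det_pos.ne'.isUnit]
  exact le_mul_of_one_le_right hB.det_pos.le
    (one_le_det_one_add (hB.inv.posSemidef.mul_mul_conjTranspose_same W))

theorem posDef_one_add {n : ℕ} (X : Matrix (Fin n) (Fin n) ℂ) : (1 + Xᴴ * X).PosDef :=
  PosDef.one.add_posSemidef (posSemidef_conjTranspose_mul_self X)

/-- By the Woodbury identity the matrix is `(1 + X Xᴴ)⁻¹`. -/
theorem posSemidef_one_sub {n : ℕ} (X : Matrix (Fin n) (Fin n) ℂ) :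
    (1 - X * (1 + Xᴴ * X)⁻¹ * Xᴴ).PosSemidef := by
  have hA := (posDef_one_add X).det_pos.ne'.isUnit
  have h : (1 + X * Xᴴ) * (1 - X * (1 + Xᴴ * X)⁻¹ * Xᴴ) = 1 := by
    have h1 : (1 + X * Xᴴ) * (X * (1 + Xᴴ * X)⁻¹ * Xᴴ) = X * Xᴴ := by
      calc _ = X * ((1 + Xᴴ * X) * (1 + Xᴴ * X)⁻¹) * Xᴴ := by noncomm_ring
        _ = _ := by rw [mul_nonsing_inv _ hA, mul_one]
    rw [mul_sub, h1]; simp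
  rw [← inv_eq_right_inv h]
  simpa using (posDef_one_add Xᴴ).inv.posSemidef

theorem stmt_0 (r s : ℕ) (X : Matrix (Fin r) (Fin r) ℂ) (Y : Matrix (Fin r) (Fin s) ℂ)
    (Z : Matrix (Fin s) (Fin s) ℂ) (T : Matrix (Fin r ⊕ Fin s) (Fin r ⊕ Fin s) ℂ)
    (hT : T = Matrix.fromBlocks X Y 0 Z) :
    ((1 + Tᴴ * T).det).re ≥ ((1 + Xᴴ * X).det).re * ((1 + Zᴴ * Z).det).re := by
  have hA := posDef_one_add X
  have hB := posDef_one_add Z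
  have hT' : 1 + Tᴴ * T =
      fromBlocks (1 + Xᴴ * X) (Xᴴ * Y) (Yᴴ * X) (1 + (Yᴴ * Y + Zᴴ * Z)) := by
    rw [hT, ← fromBlocks_one, fromBlocks_conjTranspose, fromBlocks_multiply, fromBlocks_add]
    simp
  have hS : 1 + (Yᴴ * Y + Zᴴ * Z) - Yᴴ * X * (1 + Xᴴ * X)⁻¹ * (Xᴴ * Y) =
      1 + Zᴴ * Z + Yᴴ * (1 - X * (1 + Xᴴ * X)⁻¹ * Xᴴ) * Y := by
    simp only [Matrix.mul_sub, Matrix.sub_mul, Matrix.mul_one, Matrix.mul_assoc]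
    abel
  let _ := invertibleOfIsUnitDet _ hA.det_pos.ne'.isUnit
  rw [hT', det_fromBlocks₁₁, invOf_eq_nonsing_inv, hS]
  have hle := det_le_det_add hB ((posSemidef_one_sub X).conjTranspose_mul_mul_same Y)
  -- In the order on `ℂ`, positivity of `det A` includes the vanishing of its imaginary part.
  rw [Complex.mul_re, ← (Complex.lt_def.1 hA.det_pos).2]
  have h1 := (Complex.le_def.1 hle).1
  have h2 := (Complex.lt_def.1 hA.det_pos).1
  simp only [Complex.zero_re, Complex.zero_im, zero_mul, sub_zero] at h2 ⊢
  exact mul_le_mul_of_nonneg_left h1 h2.le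
end

section
/- Let T be an n×n complex block upper triangular matrix T = [[X, Y], [0, Z]] with X of size r×r and Z of size (n−r)×(n−r). Then det(I_n + T*T) = det(I_r + X*X) · det(I_{n−r} + Z*Z) if and only if Y = 0. -/
open Matrix
open scoped ComplexOrder

/-!
With `P = 1 + Zᴴ * Z`, the Schur complement of the block `1 + Xᴴ * X` in `1 + Tᴴ * T` is
`P + Yᴴ * W * Y`, where `W = 1 - X * (1 + Xᴴ * X)⁻¹ * Xᴴ = (1 + X * Xᴴ)⁻¹` by the Woodbury identity.
So the claim reduces to: `det (P + Yᴴ * W * Y) = det P` forces `Y = 0` when `P` and `W` are positive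
definite. Writing `W = Mᴴ * M`, the quotient of the two determinants is `det (1 + C)` with
`C = (M * Y) * P⁻¹ * (M * Y)ᴴ` positive semidefinite. It is a product of factors `1 + λ ≥ 1` over
the eigenvalues `λ` of `C`, hence equals `1` only if `C = 0`, and then `Y = 0` by definiteness.
-/

/-- `det (1 + C)` is the product of `1 + λ` over the eigenvalues `λ ≥ 0` of `C`, so it is `1` only
when every eigenvalue vanishes. -/
lemma eq_zero_of_det_one_add_eq_one {n : Type*} [Fintype n] [DecidableEq n] {C : Matrix n n ℂ}
    (hC : C.PosSemidef) (h : (1 + C).det = 1) : C = 0 := by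
  rw [← hC.1.eigenvalues_eq_zero_iff]
  have hdet : (1 + C).det = ∏ i, (1 + (hC.1.eigenvalues i : ℂ)) := by
    have h1 : (1 + C).det = (-1) ^ Fintype.card n * (C.charpoly.eval (-1)) := by
      rw [Matrix.eval_charpoly, ← Matrix.det_neg]
      congr 1
      rw [map_neg, map_one]
      abel
    rw [h1, hC.1.charpoly_eq, Polynomial.eval_prod, ← Finset.card_univ, ← Finset.prod_const,
      ← Finset.prod_mul_distrib]
    refine Finset.prod_congr rfl fun i _ => ?_
    simp
    ring
  rw [hdet] at h
  have hr : ∏ i, (1 + hC.1.eigenvalues i) = 1 := by exact_mod_cast h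
  have hnn := hC.eigenvalues_nonneg
  funext i
  have hle : 1 + hC.1.eigenvalues i ≤ ∏ j, (1 + hC.1.eigenvalues j) := by
    rw [← Finset.mul_prod_erase _ _ (Finset.mem_univ i)]
    refine le_mul_of_one_le_right (by linarith [hnn i]) ?_
    exact Finset.one_le_prod fun j _ => by linarith [hnn j]
  have := hnn i
  simp only [Pi.zero_apply]
  linarith

lemma eq_zero_of_conj_posDef_eq_zero {m n : Type*} [Fintype m] [Fintype n] {A : Matrix m m ℂ}
    (hA : A.PosDef) {B : Matrix m n ℂ} (h : Bᴴ * A * B = 0) : B = 0 := by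
  classical
  refine Matrix.ext_of_mulVec_single fun i => ?_
  rw [Matrix.zero_mulVec]
  by_contra hx
  have hpos := hA.dotProduct_mulVec_pos hx
  rw [star_mulVec, dotProduct_mulVec, vecMul_vecMul, dotProduct_mulVec, vecMul_vecMul, h] at hpos
  simp at hpos

/-- The determinant is strictly increasing from `P` to `P + Yᴴ * W * Y` unless `Y = 0`. -/
lemma eq_zero_of_det_add_conj_eq {m n : Type*} [Fintype m] [DecidableEq m] [Fintype n]
    [DecidableEq n] {P : Matrix n n ℂ} {W : Matrix m m ℂ} {Y : Matrix m n ℂ} (hP : P.PosDef)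
    (hW : W.PosDef) (h : (P + Yᴴ * W * Y).det = P.det) : Y = 0 := by
  obtain ⟨M, hM⟩ : ∃ M : Matrix m m ℂ, W = Mᴴ * M := by
    open scoped MatrixOrder in
    exact CStarAlgebra.nonneg_iff_eq_star_mul_self.mp hW.posSemidef.nonneg
  have hsplit : P + Yᴴ * W * Y = P + (M * Y)ᴴ * (M * Y) := by
    rw [hM, conjTranspose_mul]; simp only [Matrix.mul_assoc]
  rw [hsplit, det_add_mul _ _ ((Matrix.isUnit_iff_isUnit_det _).mp hP.isUnit)] at h
  have h1 := mul_left_cancel₀ hP.det_pos.ne' (h.trans (mul_one _).symm)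
  have hC := eq_zero_of_det_one_add_eq_one (hP.inv.posSemidef.mul_mul_conjTranspose_same (M * Y)) h1
  have hMY : (M * Y)ᴴ = 0 :=
    eq_zero_of_conj_posDef_eq_zero hP.inv (by rwa [conjTranspose_conjTranspose])
  refine eq_zero_of_conj_posDef_eq_zero hW ?_
  rw [hM, ← Matrix.mul_assoc, ← conjTranspose_mul, hMY, Matrix.zero_mul, Matrix.zero_mul]

lemma posDef_one_add_conjTranspose_mul_self {m n : Type*} [Fintype m] [Fintype n] [DecidableEq n]
    (A : Matrix m n ℂ) : (1 + Aᴴ * A).PosDef :=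
  PosDef.one.add_posSemidef (posSemidef_conjTranspose_mul_self A)

theorem stmt_1 (r s : ℕ) (X : Matrix (Fin r) (Fin r) ℂ) (Y : Matrix (Fin r) (Fin s) ℂ)
    (Z : Matrix (Fin s) (Fin s) ℂ) (T : Matrix (Fin r ⊕ Fin s) (Fin r ⊕ Fin s) ℂ)
    (hT : T = Matrix.fromBlocks X Y 0 Z) :
    (1 + Tᴴ * T).det = (1 + Xᴴ * X).det * (1 + Zᴴ * Z).det ↔ Y = 0 := by
  have hA := posDef_one_add_conjTranspose_mul_self X
  have hP := posDef_one_add_conjTranspose_mul_self Z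
  have hW : ((1 + X * Xᴴ)⁻¹).PosDef := by
    simpa using (posDef_one_add_conjTranspose_mul_self Xᴴ).inv
  have hwood : (1 + X * Xᴴ)⁻¹ = 1 - X * (1 + Xᴴ * X)⁻¹ * Xᴴ := by
    have := add_mul_mul_inv_eq_sub (1 : Matrix (Fin r) (Fin r) ℂ) X 1 Xᴴ isUnit_one isUnit_one
      (by simpa using hA.isUnit)
    simpa using this
  have hdet : (1 + Tᴴ * T).det
      = (1 + Xᴴ * X).det * ((1 + Zᴴ * Z) + Yᴴ * (1 + X * Xᴴ)⁻¹ * Y).det := by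
    have hblocks : 1 + Tᴴ * T
        = fromBlocks (1 + Xᴴ * X) (Xᴴ * Y) (Yᴴ * X) (1 + (Yᴴ * Y + Zᴴ * Z)) := by
      rw [hT, fromBlocks_conjTranspose, fromBlocks_multiply, ← fromBlocks_one, fromBlocks_add]
      simp
    have := hA.isUnit.invertible
    rw [hblocks, det_fromBlocks₁₁, hwood, invOf_eq_nonsing_inv]
    congr 2
    simp only [Matrix.mul_sub, Matrix.sub_mul, Matrix.mul_one, Matrix.mul_assoc]
    abel
  rw [hdet, mul_right_inj' hA.det_pos.ne']
  refine ⟨eq_zero_of_det_add_conj_eq hP hW, ?_⟩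
  rintro rfl
  simp
end

section
/- Let T_1, …, T_m be n×n complex matrices, each block upper triangular of the form T_k = [[X_k, Y_k], [0, Z_k]] with X_k of size r×r and Z_k of size (n−r)×(n−r). Then det(Σ_{k=1}^m T_k* T_k) ≥ det(Σ_{k=1}^m X_k* X_k) · det(Σ_{k=1}^m Z_k* Z_k). -/
/-!
Write `A = ∑ Xₖᴴ Xₖ`, `B = ∑ Xₖᴴ Yₖ`, `D = ∑ Yₖᴴ Yₖ` and `C = ∑ Zₖᴴ Zₖ`, so that
`∑ Tₖᴴ Tₖ` is the block matrix `[[A, B], [Bᴴ, D + C]]`. If `A` is singular the right-hand side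
vanishes and the left-hand side is nonnegative. Otherwise `A` is positive definite, and the
determinant of the block matrix is `det A * det (S + C)` with `S = D - Bᴴ A⁻¹ B`. The matrix `S` is
the Schur complement of `A` in `[[A, B], [Bᴴ, D]]`, which is the Gram sum `∑ [Xₖ Yₖ]ᴴ [Xₖ Yₖ]` and
hence positive semidefinite; therefore so is `S`. The inequality reduces to monotonicity of the
determinant on positive semidefinite matrices, `det C ≤ det (C + S)`, which a congruence brings to
the case `C = 1`, where every eigenvalue of `1 + S` is at least `1`.
-/

open Matrix
open scoped ComplexOrder MatrixOrder

lemma one_le_det_one_add_s2 {n : Type*} [Fintype n] [DecidableEq n] {P : Matrix n n ℂ}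
    (hP : P.PosSemidef) : 1 ≤ (1 + P).det := by
  have key : (1 + P).det = ∏ i, (1 + (hP.1.eigenvalues i : ℂ)) := by
    -- Evaluating the characteristic polynomial at `-1` gives both sides up to the sign `(-1) ^ card n`.
    have h := congrArg (Polynomial.eval (-1)) hP.1.charpoly_eq
    rw [Matrix.eval_charpoly, Polynomial.eval_prod] at h
    have h1 : Matrix.scalar n (-1 : ℂ) - P = -(1 + P) := by
      rw [map_neg, map_one]; abel
    have h2 : ∀ i, Polynomial.eval (-1 : ℂ)
        (Polynomial.X - Polynomial.C (hP.1.eigenvalues i : ℂ))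
          = (-1) * (1 + (hP.1.eigenvalues i : ℂ)) := by
      intro i; simp; ring
    rw [h1, Matrix.det_neg] at h
    erw [Finset.prod_congr rfl fun i _ => h2 i] at h
    rw [Finset.prod_mul_distrib, Finset.prod_const, Finset.card_univ] at h
    exact mul_left_cancel₀ (pow_ne_zero _ (by norm_num)) h
  rw [key]
  have hr : (1 : ℝ) ≤ ∏ i, (1 + hP.1.eigenvalues i) :=
    Finset.one_le_prod fun i _ => by linarith [hP.eigenvalues_nonneg i]
  exact_mod_cast hr

/-- The determinant is monotone for the Loewner order on positive semidefinite matrices. -/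
lemma det_le_det_add_s2 {n : Type*} [Fintype n] [DecidableEq n] {C S : Matrix n n ℂ}
    (hC : C.PosSemidef) (hS : S.PosSemidef) : C.det ≤ (C + S).det := by
  by_cases h0 : C.det = 0
  · rw [h0]
    exact (hC.add hS).det_nonneg
  obtain ⟨K, rfl⟩ : ∃ K : Matrix n n ℂ, C = Kᴴ * K :=
    CStarAlgebra.nonneg_iff_eq_star_mul_self.mp hC.nonneg
  have hK : IsUnit K.det := by
    rw [isUnit_iff_ne_zero]
    intro h
    exact h0 (by rw [det_mul, h, mul_zero])
  have hKH : Kᴴ * (K⁻¹)ᴴ = 1 := by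
    rw [← conjTranspose_mul, nonsing_inv_mul _ hK, conjTranspose_one]
  -- Congruence by `K⁻¹` turns `Kᴴ * K` into the identity.
  have e : Kᴴ * K + S = Kᴴ * (1 + (K⁻¹)ᴴ * S * K⁻¹) * K := by
    have : Kᴴ * ((K⁻¹)ᴴ * S * K⁻¹) * K = (Kᴴ * (K⁻¹)ᴴ) * S * (K⁻¹ * K) := by
      simp only [Matrix.mul_assoc]
    rw [Matrix.mul_add, Matrix.add_mul, this, hKH, nonsing_inv_mul _ hK]
    simp
  have h1 := one_le_det_one_add_s2 (hS.conjTranspose_mul_mul_same K⁻¹)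
  calc (Kᴴ * K).det = (Kᴴ * K).det * 1 := (mul_one _).symm
    _ ≤ (Kᴴ * K).det * (1 + (K⁻¹)ᴴ * S * K⁻¹).det :=
        mul_le_mul_of_nonneg_left h1 hC.det_nonneg
    _ = (Kᴴ * K + S).det := by
        rw [e]; simp only [det_mul]; ring

lemma posSemidef_gram_sum {ι a b : Type*} [Fintype ι] [Fintype a] [Fintype b]
    (M : ι → Matrix a b ℂ) : (∑ k, (M k)ᴴ * M k).PosSemidef :=
  posSemidef_sum _ fun k _ => posSemidef_conjTranspose_mul_self (M k)

lemma sum_fromBlocks {ι a b : Type*} [Fintype ι]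
    (A : ι → Matrix a a ℂ) (B : ι → Matrix a b ℂ) (C : ι → Matrix b a ℂ)
    (D : ι → Matrix b b ℂ) :
    ∑ k, fromBlocks (A k) (B k) (C k) (D k)
      = fromBlocks (∑ k, A k) (∑ k, B k) (∑ k, C k) (∑ k, D k) := by
  ext (i | i) (j | j) <;> simp [Matrix.sum_apply]

theorem stmt_2 (r s m : ℕ) (X : Fin m → Matrix (Fin r) (Fin r) ℂ)
    (Y : Fin m → Matrix (Fin r) (Fin s) ℂ) (Z : Fin m → Matrix (Fin s) (Fin s) ℂ)
    (T : Fin m → Matrix (Fin r ⊕ Fin s) (Fin r ⊕ Fin s) ℂ)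
    (hT : ∀ k, T k = Matrix.fromBlocks (X k) (Y k) 0 (Z k)) :
    ((∑ k, (T k)ᴴ * T k).det).re ≥
      ((∑ k, (X k)ᴴ * X k).det).re * ((∑ k, (Z k)ᴴ * Z k).det).re := by
  have hA := posSemidef_gram_sum X
  have hC := posSemidef_gram_sum Z
  have hTT := posSemidef_gram_sum T
  suffices h : (∑ k, (X k)ᴴ * X k).det * (∑ k, (Z k)ᴴ * Z k).det ≤ (∑ k, (T k)ᴴ * T k).det by
    have h' := (Complex.le_def.mp h).1
    have him : ((∑ k, (X k)ᴴ * X k).det).im = 0 := (Complex.le_def.mp hA.det_nonneg).2.symm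
    rw [Complex.mul_re, him, zero_mul, sub_zero] at h'
    exact h'
  by_cases h0 : (∑ k, (X k)ᴴ * X k).det = 0
  · rw [h0, zero_mul]
    exact hTT.det_nonneg
  have hApd : (∑ k, (X k)ᴴ * X k).PosDef := hA.posDef_iff_det_ne_zero.mpr h0
  have hB : (∑ k, (X k)ᴴ * Y k)ᴴ = ∑ k, (Y k)ᴴ * X k := by
    simp [conjTranspose_sum]
  have hTsum : ∑ k, (T k)ᴴ * T k = fromBlocks (∑ k, (X k)ᴴ * X k) (∑ k, (X k)ᴴ * Y k)
      (∑ k, (X k)ᴴ * Y k)ᴴ (∑ k, (Y k)ᴴ * Y k + ∑ k, (Z k)ᴴ * Z k) := by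
    rw [hB, ← Finset.sum_add_distrib, ← sum_fromBlocks]
    refine Finset.sum_congr rfl fun k _ => ?_
    rw [hT, fromBlocks_conjTranspose, fromBlocks_multiply]
    simp
  -- `[Xₖ Yₖ]` padded by zero rows has the same Gram matrix.
  have hG : (fromBlocks (∑ k, (X k)ᴴ * X k) (∑ k, (X k)ᴴ * Y k)
      (∑ k, (X k)ᴴ * Y k)ᴴ (∑ k, (Y k)ᴴ * Y k)).PosSemidef := by
    have h := posSemidef_gram_sum fun k =>
      (fromBlocks (X k) (Y k) 0 0 : Matrix (Fin r ⊕ Fin s) (Fin r ⊕ Fin s) ℂ)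
    simp only [fromBlocks_conjTranspose, fromBlocks_multiply, sum_fromBlocks] at h
    rw [hB]
    simpa using h
  let _ : Invertible (∑ k, (X k)ᴴ * X k) := hApd.isUnit.invertible
  have hS := (PosDef.fromBlocks₁₁ _ _ hApd).mp hG
  rw [hTsum, det_fromBlocks₁₁, invOf_eq_nonsing_inv, add_sub_right_comm, add_comm (_ - _)]
  exact mul_le_mul_of_nonneg_left (det_le_det_add_s2 hC hS) hA.det_nonneg
end
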